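/- arXiv:2105.12272 — 2 statements merged into one kernel-verified Lean document; each statement's English description precedes it below -/
import Mathlib

section
/- Expected conditional total-variation error of empirical conditionals: Let S and A be nonempty finite sets, ρ a probability distribution on S, and π a map assigning to each s∈S a probability distribution π(·|s) on A. Let (s_1,a_1), …, (s_n,a_n) be i.i.d. with joint law x(s,a) = ρ(s)π(a|s). Define the empirical conditional π̂(a|s) = #{j : (s_j,a_j)=(s,a)} / #{j : s_j = s} for s with #{j : s_j = s} > 0, and let π̂(·|s) be an arbitrary fixed probability distribution on A for s not appearing in the sample. Then E[ ∑_{s∈S} ρ(s) · D_TV(π(·|s) ‖ π̂(·|s)) ] ≤ √( |S||A| / n ). -/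
open Finset

noncomputable section

variable {S A Z : Type*}

/-- State distribution at time `t` when following policy `π` from initial distribution `μ`. -/
def stateDist [Fintype S] [Fintype A] (P : S → A → S → ℝ) (π : S → A → ℝ)
    (μ : S → ℝ) : ℕ → S → ℝ
  | 0 => μ
  | t + 1 => fun s' => ∑ s : S, ∑ a : A, π s a * P s a s' * stateDist P π μ t s

/-- Discounted visitation distribution `d^π`. -/
def visitation [Fintype S] [Fintype A] (P : S → A → S → ℝ) (π : S → A → ℝ)
    (μ : S → ℝ) (γ : ℝ) (s : S) : ℝ :=
  (1 - γ) * ∑' t : ℕ, γ ^ t * stateDist P π μ t s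

/-- Performance `J(π)`. -/
def perf [Fintype S] [Fintype A] (P : S → A → S → ℝ) (R : S → A → ℝ)
    (π : S → A → ℝ) (μ : S → ℝ) (γ : ℝ) : ℝ :=
  ∑' t : ℕ, γ ^ t * ∑ s : S, ∑ a : A, R s a * π s a * stateDist P π μ t s

/-- `PerfDiff(π, π')`. -/
def perfDiff [Fintype S] [Fintype A] (P : S → A → S → ℝ) (R : S → A → ℝ)
    (μ : S → ℝ) (γ : ℝ) (π π' : S → A → ℝ) : ℝ :=
  |perf P R π μ γ - perf P R π' μ γ|

/-- Total variation distance. -/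
def dTV {X : Type*} [Fintype X] (p q : X → ℝ) : ℝ :=
  (1 / 2) * ∑ x : X, |p x - q x|

/-- KL divergence. -/
def dKL {X : Type*} [Fintype X] (p q : X → ℝ) : ℝ :=
  ∑ x : X, p x * Real.log (p x / q x)

/-- Pearson chi-squared divergence (terms with `q x = 0` vanish by the `x / 0 = 0` convention). -/
def dChi2 {X : Type*} [Fintype X] (p q : X → ℝ) : ℝ :=
  ∑ x : X, (p x - q x) ^ 2 / q x

/-- `Err_ρ(π1, π2, F)` for a reward-like function `F`. -/
def errF [Fintype S] [Fintype A] (ρ : S → ℝ) (π1 π2 : S → A → ℝ) (F : S → A → ℝ) : ℝ :=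
  |∑ s : S, ρ s * ∑ a : A, (π1 s a - π2 s a) * F s a|

/-- `Err_ρ(π1, π2, G)` for a transition-like function `G`. -/
def errG [Fintype S] [Fintype A] (ρ : S → ℝ) (π1 π2 : S → A → ℝ) (G : S → A → S → ℝ) : ℝ :=
  ∑ s' : S, |∑ s : S, ρ s * ∑ a : A, (π1 s a - π2 s a) * G s a s'|

/-- Marginalization `ρ_Z` of a state distribution onto `Z` via `φ`. -/
def margDist [Fintype S] [DecidableEq Z] (φ : S → Z) (ρ : S → ℝ) (z : Z) : ℝ :=
  ∑ s : S, if φ s = z then ρ s else 0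

/-- Marginalization `π_Z` of a policy onto `Z` via `φ`, w.r.t. the state distribution `ρ`
(by the `x / 0 = 0` convention it takes a fixed arbitrary value when `ρ_Z(z) = 0`). -/
def margPolicy [Fintype S] [DecidableEq Z] (φ : S → Z) (ρ : S → ℝ) (π : S → A → ℝ)
    (z : Z) (a : A) : ℝ :=
  (∑ s : S, if φ s = z then ρ s * π s a else 0) / margDist φ ρ z

/-- Log-linear (softmax) policy `π_θ(a|z)`. -/
def softmaxPol {d : ℕ} [Fintype A] (θ : A → Fin d → ℝ) (z : Fin d → ℝ) (a : A) : ℝ :=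
  Real.exp (∑ i, θ a i * z i) / ∑ b : A, Real.exp (∑ i, θ b i * z i)

/-- Sum of absolute values of all partial derivatives of `L : ℝ^{d×|A|} → ℝ` at `θ`. -/
def gradL1 {d : ℕ} [Fintype A] [DecidableEq A] (L : (A → Fin d → ℝ) → ℝ)
    (θ : A → Fin d → ℝ) : ℝ :=
  ∑ a : A, ∑ i : Fin d, |fderiv ℝ L θ (Pi.single a (Pi.single i 1))|

theorem aux_sum_cons {X : Type*} [Fintype X] (n : ℕ) (F : (Fin (n+1) → X) → ℝ) :
    ∑ ω : Fin (n+1) → X, F ω = ∑ x : X, ∑ ω : Fin n → X, F (Fin.cons x ω) := by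
  rw [← Fintype.sum_prod_type']
  exact (Fintype.sum_equiv (Fin.consEquiv (fun _ : Fin (n+1) => X)) _ _ (fun _ => rfl)).symm

theorem aux_moments {X : Type*} [Fintype X] (p f : X → ℝ) (hp : ∑ x, p x = 1)
    (hf : ∑ x, p x * f x = 0) (n : ℕ) :
    (∑ ω : Fin n → X, ∏ j, p (ω j) = 1) ∧
    (∑ ω : Fin n → X, (∏ j, p (ω j)) * ∑ j, f (ω j) = 0) ∧
    (∑ ω : Fin n → X, (∏ j, p (ω j)) * (∑ j, f (ω j)) ^ 2 = n * ∑ x, p x * f x ^ 2) := by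
  induction n with
  | zero => simp
  | succ n ih =>
    obtain ⟨h0, h1, h2⟩ := ih
    simp only [aux_sum_cons, Fin.prod_univ_succ, Fin.sum_univ_succ, Fin.cons_zero, Fin.cons_succ]
    refine ⟨?_, ?_, ?_⟩
    · simp only [← mul_sum, h0, hp, mul_one]
    · have : ∀ x : X, ∑ ω : Fin n → X, p x * (∏ j, p (ω j)) * (f x + ∑ j, f (ω j))
          = p x * f x := by
        intro x
        calc _ = p x * f x * (∑ ω : Fin n → X, ∏ j, p (ω j))
              + p x * ∑ ω : Fin n → X, (∏ j, p (ω j)) * ∑ j, f (ω j) := by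
              rw [mul_sum, mul_sum, ← sum_add_distrib]
              exact sum_congr rfl fun _ _ => by ring
          _ = _ := by rw [h0, h1]; ring
      simp only [this, hf]
    · have : ∀ x : X, ∑ ω : Fin n → X, p x * (∏ j, p (ω j)) * (f x + ∑ j, f (ω j)) ^ 2
          = p x * f x ^ 2 + p x * (n * ∑ x, p x * f x ^ 2) := by
        intro x
        calc _ = p x * f x ^ 2 * (∑ ω : Fin n → X, ∏ j, p (ω j))
              + 2 * p x * f x * (∑ ω : Fin n → X, (∏ j, p (ω j)) * ∑ j, f (ω j))
              + p x * ∑ ω : Fin n → X, (∏ j, p (ω j)) * (∑ j, f (ω j)) ^ 2 := by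
              rw [mul_sum, mul_sum, mul_sum, ← sum_add_distrib, ← sum_add_distrib]
              exact sum_congr rfl fun _ _ => by ring
          _ = _ := by rw [h0, h1, h2]; ring
      simp only [this, sum_add_distrib, ← sum_mul, hp]
      push_cast; ring

theorem aux_var {X : Type*} [Fintype X] [DecidableEq X] (p : X → ℝ) (hp : ∑ x, p x = 1)
    (n : ℕ) (hn : 0 < n) (y : X) :
    ∑ ω : Fin n → X, (∏ j, p (ω j)) *
      (p y - ((univ.filter fun j : Fin n => ω j = y).card : ℝ) / n) ^ 2 ≤ p y / n := by
  have hn' : (0:ℝ) < n := by exact_mod_cast hn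
  let f : X → ℝ := fun x => (if x = y then 1 else 0) - p y
  have hf : ∑ x, p x * f x = 0 := by
    simp [f, mul_sub, sum_sub_distrib, ← sum_mul, hp]
  have hf2 : ∑ x, p x * f x ^ 2 = p y - p y ^ 2 := by
    have : ∀ x, p x * f x ^ 2 = (if x = y then p x * (1 - 2 * p y) else 0) + p x * p y ^ 2 := by
      intro x; simp only [f]; split_ifs <;> ring
    simp only [this, sum_add_distrib, ← sum_mul, hp]
    simp; ring
  have h := (aux_moments p f hp hf n).2.2
  have e : ∀ ω : Fin n → X, (∏ j, p (ω j)) *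
      (p y - ((univ.filter fun j : Fin n => ω j = y).card : ℝ) / n) ^ 2 =
      (∏ j, p (ω j)) * (∑ j, f (ω j)) ^ 2 * (1 / (n:ℝ) ^ 2) := by
    intro ω
    have : ∑ j, f (ω j) = ((univ.filter fun j : Fin n => ω j = y).card : ℝ) - n * p y := by
      simp [f, sum_sub_distrib]
    rw [this]; field_simp; ring
  simp only [e]
  rw [← sum_mul, h, hf2]
  field_simp
  nlinarith [sq_nonneg (p y)]

theorem aux_point {A : Type*} [Fintype A] (r t : ℝ) (p q x : A → ℝ) (hr : 0 ≤ r) 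
    (hp : ∑ a, p a = 1) (hq0 : ∀ a, 0 ≤ q a) (hq : ∑ a, q a = 1) (hx : ∀ a, x a = t * q a) :
    r * dTV p q ≤ ∑ a, |r * p a - x a| := by
  have h1 : |r - t| ≤ ∑ a, |r * p a - x a| := by
    have : r - t = ∑ a, (r * p a - x a) := by
      simp only [hx, sum_sub_distrib, ← mul_sum, hp, hq, mul_one]
    rw [this]; exact abs_sum_le_sum_abs _ _
  have h2 : r * ∑ a, |p a - q a| ≤ ∑ a, |r * p a - x a| + |r - t| := by
    calc r * ∑ a, |p a - q a| = ∑ a, |r * (p a - q a)| := by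
          rw [mul_sum]; exact sum_congr rfl fun a _ => by rw [abs_mul, abs_of_nonneg hr]
      _ ≤ ∑ a, (|r * p a - x a| + |r - t| * q a) := by
          refine sum_le_sum fun a _ => ?_
          have e : r * (p a - q a) = (r * p a - x a) + -((r - t) * q a) := by rw [hx]; ring
          rw [e]
          refine (abs_add_le _ _).trans ?_
          rw [abs_neg, abs_mul, abs_of_nonneg (hq0 a)]
      _ = _ := by rw [sum_add_distrib, ← mul_sum, hq, mul_one]
  unfold dTV
  linarith

theorem expected_conditional_tv_error_of_empirical_conditionals
    [Fintype S] [Fintype A] [Nonempty S] [Nonempty A] [DecidableEq S] [DecidableEq A]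
    (n : ℕ) (hn : 0 < n)
    (ρ : S → ℝ) (hρ0 : ∀ s, 0 ≤ ρ s) (hρ1 : ∑ s : S, ρ s = 1)
    (π : S → A → ℝ) (hπ0 : ∀ s a, 0 ≤ π s a) (hπ1 : ∀ s, ∑ a : A, π s a = 1)
    (π₀ : S → A → ℝ) (hπ₀0 : ∀ s a, 0 ≤ π₀ s a) (hπ₀1 : ∀ s, ∑ a : A, π₀ s a = 1) :
    ∑ ω : Fin n → S × A, (∏ j : Fin n, ρ (ω j).1 * π (ω j).1 (ω j).2) *
        ∑ s : S, ρ s * dTV (π s) (fun a =>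
          if 0 < (univ.filter fun j : Fin n => (ω j).1 = s).card then
            ((univ.filter fun j : Fin n => ω j = (s, a)).card : ℝ) /
              ((univ.filter fun j : Fin n => (ω j).1 = s).card : ℝ)
          else π₀ s a) ≤
      Real.sqrt ((Fintype.card S * Fintype.card A : ℝ) / n) := by
  have hn' : (0:ℝ) < n := by exact_mod_cast hn
  let p : S × A → ℝ := fun z => ρ z.1 * π z.1 z.2
  have hp0 : ∀ z, 0 ≤ p z := fun z => mul_nonneg (hρ0 _) (hπ0 _ _)
  have hp1 : ∑ z, p z = 1 := by
    simp only [p, Fintype.sum_prod_type, ← mul_sum, hπ1, mul_one, hρ1]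
  let w : (Fin n → S × A) → ℝ := fun ω => ∏ j, p (ω j)
  have hw0 : ∀ ω, 0 ≤ w ω := fun ω => prod_nonneg fun j _ => hp0 _
  have hw1 : ∑ ω, w ω = 1 := (aux_moments p (fun _ => 0) hp1 (by simp) n).1
  let d : (Fin n → S × A) → S × A → ℝ := fun ω z =>
    p z - ((univ.filter fun j : Fin n => ω j = z).card : ℝ) / n
  let G : (Fin n → S × A) → ℝ := fun ω => ∑ z, |d ω z|
  have hstep : ∑ ω, w ω * G ω ≤ Real.sqrt ((Fintype.card S * Fintype.card A : ℝ) / n) := by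
    apply Real.le_sqrt_of_sq_le
    have hcs : (∑ ω, w ω * G ω) ^ 2 ≤ ∑ ω, w ω * G ω ^ 2 := by
      have h := Finset.sum_sq_le_sum_mul_sum_of_sq_eq_mul (univ : Finset (Fin n → S × A))
        (r := fun ω => w ω * G ω) (f := w) (g := fun ω => w ω * G ω ^ 2)
        (fun ω _ => hw0 ω) (fun ω _ => mul_nonneg (hw0 ω) (sq_nonneg _)) (fun ω _ => by ring)
      rwa [hw1, one_mul] at h
    have hG : ∀ ω, G ω ^ 2 ≤ (Fintype.card S * Fintype.card A : ℝ) * ∑ z, d ω z ^ 2 := by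
      intro ω
      have h := sq_sum_le_card_mul_sum_sq (s := (univ : Finset (S × A))) (f := fun z => |d ω z|)
      simpa [G, Fintype.card_prod, sq_abs] using h
    calc _ ≤ _ := hcs
      _ ≤ ∑ ω, w ω * ((Fintype.card S * Fintype.card A : ℝ) * ∑ z, d ω z ^ 2) :=
        sum_le_sum fun ω _ => mul_le_mul_of_nonneg_left (hG ω) (hw0 ω)
      _ = (Fintype.card S * Fintype.card A : ℝ) * ∑ z, ∑ ω, w ω * d ω z ^ 2 := by
        rw [sum_comm, mul_sum]
        refine sum_congr rfl fun ω _ => ?_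
        rw [← mul_sum]; ring
      _ ≤ (Fintype.card S * Fintype.card A : ℝ) * ∑ z, p z / n := by
        refine mul_le_mul_of_nonneg_left (sum_le_sum fun z _ => aux_var p hp1 n hn z) (by positivity)
      _ = _ := by rw [← sum_div, hp1]; ring
  refine le_trans (sum_le_sum fun ω _ => mul_le_mul_of_nonneg_left ?_ (hw0 ω)) hstep
  simp only [G, Fintype.sum_prod_type]
  refine sum_le_sum fun s _ => ?_
  have hcard : ∑ a, ((univ.filter fun j : Fin n => ω j = (s, a)).card : ℝ) =
      ((univ.filter fun j : Fin n => (ω j).1 = s).card : ℝ) := by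
    rw [← Nat.cast_sum]
    congr 1
    rw [card_eq_sum_card_fiberwise (f := fun j => (ω j).2) (t := univ) (fun _ _ => by simp)]
    refine sum_congr rfl fun a _ => ?_
    congr 1
    ext j
    simp [Prod.ext_iff]
  refine aux_point (ρ s) (((univ.filter fun j : Fin n => (ω j).1 = s).card : ℝ) / n) (π s) _
    (fun a => ((univ.filter fun j : Fin n => ω j = (s, a)).card : ℝ) / n) (hρ0 s) (hπ1 s) ?_ ?_ ?_
  · intro a
    split_ifs
    · positivity
    · exact hπ₀0 s a
  · split_ifs with h
    · rw [← sum_div, hcard]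
      exact div_self (by exact_mod_cast h.ne')
    · exact hπ₀1 s
  · intro a
    split_ifs with h
    · have : ((univ.filter fun j : Fin n => (ω j).1 = s).card : ℝ) ≠ 0 := by exact_mod_cast h.ne'
      field_simp
    · have h0 : (univ.filter fun j : Fin n => (ω j).1 = s).card = 0 := by omega
      have h1 : ((univ.filter fun j : Fin n => ω j = (s, a)).card : ℝ) ≤ 0 := by
        have := single_le_sum (f := fun a => ((univ.filter fun j : Fin n => ω j = (s, a)).card : ℝ))
          (fun _ _ => by positivity) (mem_univ a)
        rw [hcard, h0] at this
        simpa using this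
      have h2 : ((univ.filter fun j : Fin n => ω j = (s, a)).card : ℝ) = 0 :=
        le_antisymm h1 (by positivity)
      rw [h0, h2]; simp
end
end

section
/- Theorem (sample efficiency of representation-based behavioral cloning): Let π* be a policy in a finite MDP and d^off a probability distribution on S with d^off(s) > 0 whenever d^{π*}(s) > 0. Let Z be a finite set, φ : S → Z, R_Z : Z×A → [−R_max, R_max], and P_Z a function where P_Z(·|z,a) is a probability distribution on S for every (z,a) with P_Z(s'|φ(s),a) > 0 whenever P(s'|s,a) > 0 and d^off(s) > 0, and let ε = (|A|/(1−γ)) J_R + (2γ|A| R_max/(1−γ)²) J_T with J_R = √(∑_s d^off(s)(1/|A|)∑_a (R(s,a)−R_Z(φ(s),a))²) and J_T = √((1/2)∑_s d^off(s)(1/|A|)∑_a D_KL(P(·|s,a)‖P_Z(·|φ(s),a))). Let (s_1,a_1),…,(s_N,a_N) be i.i.d. with s_j ∼ d^{π*} and a_j ∼ π*(·|s_j), and let π_{N,Z} be the tabular behavioral-cloning policy on Z: π_{N,Z}(a|z) = #{j : (φ(s_j),a_j)=(z,a)} / #{j : φ(s_j)=z} for z with #{j : φ(s_j)=z} > 0,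 and π_{N,Z}(·|z) an arbitrary fixed probability distribution on A otherwise. Then E[ PerfDiff(π_{N,Z}∘φ, π*) ] ≤ (1 + D_χ²(d^{π*}‖d^off)^{1/2}) · ε + (2R_max/(1−γ)²) · √( |Z||A| / N ), where the expectation is over the i.i.d. demonstration sample and π_{N,Z}∘φ is the policy s ↦ π_{N,Z}(·|φ(s)). -/
open Finset

noncomputable section

variable {S A Z : Type*}

section MDP
variable [Fintype S] [Fintype A]

lemma stateDist_nonneg' (P : S → A → S → ℝ) (hP0 : ∀ s a s', 0 ≤ P s a s')
    (π : S → A → ℝ) (hπ0 : ∀ s a, 0 ≤ π s a) (μ : S → ℝ) (hμ0 : ∀ s, 0 ≤ μ s) (t : ℕ) (s : S) :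
    0 ≤ stateDist P π μ t s := by
  induction t generalizing s with
  | zero => exact hμ0 s
  | succ t ih =>
    simp only [stateDist]
    exact sum_nonneg fun x _ => sum_nonneg fun a _ =>
      mul_nonneg (mul_nonneg (hπ0 _ _) (hP0 _ _ _)) (ih x)

lemma stateDist_sum' (P : S → A → S → ℝ) (hP1 : ∀ s a, ∑ s' : S, P s a s' = 1)
    (π : S → A → ℝ) (hπ1 : ∀ s, ∑ a : A, π s a = 1) (μ : S → ℝ) (hμ1 : ∑ s : S, μ s = 1) (t : ℕ) :
    ∑ s, stateDist P π μ t s = 1 := by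
  induction t with
  | zero => exact hμ1
  | succ t ih =>
    simp only [stateDist]
    rw [sum_comm]
    rw [← ih]
    refine sum_congr rfl fun s _ => ?_
    rw [sum_comm]
    simp_rw [← sum_mul, ← mul_sum, hP1, mul_one, hπ1, one_mul]

/-- unnormalised occupancy -/
def occ (P : S → A → S → ℝ) (π : S → A → ℝ) (μ : S → ℝ) (γ : ℝ) (s : S) : ℝ :=
  ∑' t : ℕ, γ ^ t * stateDist P π μ t s

lemma occ_facts (P : S → A → S → ℝ) (hP0 : ∀ s a s', 0 ≤ P s a s')
    (hP1 : ∀ s a, ∑ s' : S, P s a s' = 1)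
    (R : S → A → ℝ)
    (μ : S → ℝ) (hμ0 : ∀ s, 0 ≤ μ s) (hμ1 : ∑ s : S, μ s = 1)
    (γ : ℝ) (hγ0 : 0 ≤ γ) (hγ1 : γ < 1)
    (π : S → A → ℝ) (hπ0 : ∀ s a, 0 ≤ π s a) (hπ1 : ∀ s, ∑ a : A, π s a = 1) :
    (∀ s, 0 ≤ occ P π μ γ s) ∧ (∑ s, occ P π μ γ s = (1 - γ)⁻¹) ∧
    (∀ s', occ P π μ γ s' = μ s' + γ * ∑ s, ∑ a, π s a * P s a s' * occ P π μ γ s) ∧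
    perf P R π μ γ = ∑ s, ∑ a, R s a * π s a * occ P π μ γ s := by
  have h0 := stateDist_nonneg' P hP0 π hπ0 μ hμ0
  have h1 := stateDist_sum' P hP1 π hπ1 μ hμ1
  have hle : ∀ t s, stateDist P π μ t s ≤ 1 := fun t s => by
    rw [← h1 t]; exact single_le_sum (fun i _ => h0 t i) (mem_univ s)
  have hs : ∀ s, Summable fun t : ℕ => γ ^ t * stateDist P π μ t s := fun s => by
    refine Summable.of_nonneg_of_le (fun t => mul_nonneg (pow_nonneg hγ0 t) (h0 t s)) (fun t => ?_)
      (summable_geometric_of_lt_one hγ0 hγ1)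
    exact mul_le_of_le_one_right (pow_nonneg hγ0 t) (hle t s)
  refine ⟨fun s => tsum_nonneg fun t => mul_nonneg (pow_nonneg hγ0 t) (h0 t s), ?_, ?_, ?_⟩
  · unfold occ
    rw [← Summable.tsum_finsetSum (fun s _ => hs s)]
    simp_rw [← mul_sum, h1, mul_one]
    exact tsum_geometric_of_lt_one hγ0 hγ1
  · intro s'
    unfold occ
    rw [(hs s').tsum_eq_zero_add]
    simp only [pow_zero, one_mul]
    congr 1
    have : ∀ s a, π s a * P s a s' * ∑' t, γ ^ t * stateDist P π μ t s
        = ∑' t, π s a * P s a s' * (γ ^ t * stateDist P π μ t s) := fun s a => by rw [tsum_mul_left]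
    simp_rw [this]
    have h2 : ∀ s, ∑ a, ∑' t, π s a * P s a s' * (γ ^ t * stateDist P π μ t s)
        = ∑' t, ∑ a, π s a * P s a s' * (γ ^ t * stateDist P π μ t s) := fun s =>
      (Summable.tsum_finsetSum (fun a _ => (hs s).mul_left _)).symm
    simp_rw [h2]
    rw [← Summable.tsum_finsetSum (fun s _ => summable_sum fun a _ => (hs s).mul_left _),
      ← tsum_mul_left]
    refine tsum_congr fun t => ?_
    simp only [stateDist, pow_succ, mul_sum]
    refine sum_congr rfl fun s _ => sum_congr rfl fun a _ => by ring
  · unfold perf occ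
    simp_rw [← tsum_mul_left]
    have h2 : ∀ s, ∑ a, ∑' t, R s a * π s a * (γ ^ t * stateDist P π μ t s)
        = ∑' t, ∑ a, R s a * π s a * (γ ^ t * stateDist P π μ t s) := fun s =>
      (Summable.tsum_finsetSum (fun a _ => (hs s).mul_left _)).symm
    simp_rw [h2]
    rw [← Summable.tsum_finsetSum (fun s _ => summable_sum fun a _ => (hs s).mul_left _)]
    refine tsum_congr fun t => ?_
    simp only [mul_sum]
    refine sum_congr rfl fun s _ => sum_congr rfl fun a _ => by ring

/-- iterates of the Bellman transition -/
def bellIt (P : S → A → S → ℝ) (R : S → A → ℝ) (π : S → A → ℝ) : ℕ → S → ℝ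
  | 0 => fun s => ∑ a, π s a * R s a
  | t + 1 => fun s => ∑ a, π s a * ∑ s', P s a s' * bellIt P R π t s'

lemma avg_abs_le {X : Type*} [Fintype X] (p f : X → ℝ) (hp : ∀ x, 0 ≤ p x) (h1 : ∑ x, p x = 1)
    (C : ℝ) (hf : ∀ x, |f x| ≤ C) : |∑ x, p x * f x| ≤ C := by
  calc |∑ x, p x * f x| ≤ ∑ x, |p x * f x| := abs_sum_le_sum_abs _ _
    _ ≤ ∑ x, p x * C := sum_le_sum fun x _ => by
        rw [abs_mul, abs_of_nonneg (hp x)]; exact mul_le_mul_of_nonneg_left (hf x) (hp x)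
    _ = C := by rw [← sum_mul, h1, one_mul]

lemma exists_value (P : S → A → S → ℝ) (hP0 : ∀ s a s', 0 ≤ P s a s')
    (hP1 : ∀ s a, ∑ s' : S, P s a s' = 1)
    (R : S → A → ℝ) (Rmax : ℝ) (hR : ∀ s a, |R s a| ≤ Rmax)
    (γ : ℝ) (hγ0 : 0 ≤ γ) (hγ1 : γ < 1)
    (π : S → A → ℝ) (hπ0 : ∀ s a, 0 ≤ π s a) (hπ1 : ∀ s, ∑ a : A, π s a = 1) :
    ∃ V : S → ℝ, (∀ s, |V s| ≤ Rmax / (1 - γ)) ∧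
      ∀ s, V s = ∑ a, π s a * (R s a + γ * ∑ s', P s a s' * V s') := by
  have hb : ∀ t s, |bellIt P R π t s| ≤ Rmax := by
    intro t
    induction t with
    | zero => exact fun s => avg_abs_le _ _ (hπ0 s) (hπ1 s) _ (hR s)
    | succ t ih =>
      exact fun s => avg_abs_le _ _ (hπ0 s) (hπ1 s) _
        (fun a => avg_abs_le _ _ (hP0 s a) (hP1 s a) _ ih)
  have hg := summable_geometric_of_lt_one hγ0 hγ1
  have hbb : ∀ s t, ‖γ ^ t * bellIt P R π t s‖ ≤ γ ^ t * Rmax := fun s t => by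
    rw [Real.norm_eq_abs, abs_mul, abs_of_nonneg (pow_nonneg hγ0 t)]
    exact mul_le_mul_of_nonneg_left (hb t s) (pow_nonneg hγ0 t)
  have hs : ∀ s, Summable fun t : ℕ => γ ^ t * bellIt P R π t s := fun s =>
    Summable.of_norm_bounded (hg.mul_right Rmax) (hbb s)
  refine ⟨fun s => ∑' t : ℕ, γ ^ t * bellIt P R π t s, fun s => ?_, fun s => ?_⟩
  · have : HasSum (fun t : ℕ => γ ^ t * Rmax) (Rmax / (1 - γ)) := by
      have := (hasSum_geometric_of_lt_one hγ0 hγ1).mul_right Rmax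
      rwa [inv_mul_eq_div] at this
    exact tsum_of_norm_bounded this (hbb s)
  · simp only
    rw [(hs s).tsum_eq_zero_add]
    simp_rw [← tsum_mul_left]
    have h2 : ∀ a, ∑ s', ∑' t, P s a s' * (γ ^ t * bellIt P R π t s')
        = ∑' t, ∑ s', P s a s' * (γ ^ t * bellIt P R π t s') := fun a =>
      (Summable.tsum_finsetSum (fun s' _ => (hs s').mul_left _)).symm
    simp_rw [h2, mul_add, sum_add_distrib, ← tsum_mul_left]
    rw [← Summable.tsum_finsetSum (fun a _ =>
      ((summable_sum fun s' _ => (hs s').mul_left _).mul_left _).mul_left _)]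
    congr 1
    · simp [bellIt]
    · refine tsum_congr fun t => ?_
      simp only [bellIt, pow_succ, mul_sum]
      refine sum_congr rfl fun a _ => sum_congr rfl fun s' _ => by ring

lemma perf_diff_lemma (P : S → A → S → ℝ) (hP0 : ∀ s a s', 0 ≤ P s a s')
    (hP1 : ∀ s a, ∑ s' : S, P s a s' = 1)
    (R : S → A → ℝ) (Rmax : ℝ) (hR : ∀ s a, |R s a| ≤ Rmax)
    (μ : S → ℝ) (hμ0 : ∀ s, 0 ≤ μ s) (hμ1 : ∑ s : S, μ s = 1)
    (γ : ℝ) (hγ0 : 0 ≤ γ) (hγ1 : γ < 1)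
    (π : S → A → ℝ) (hπ0 : ∀ s a, 0 ≤ π s a) (hπ1 : ∀ s, ∑ a : A, π s a = 1)
    (πs : S → A → ℝ) (hπs0 : ∀ s a, 0 ≤ πs s a) (hπs1 : ∀ s, ∑ a : A, πs s a = 1) :
    ∃ V : S → ℝ, (∀ s, |V s| ≤ Rmax / (1 - γ)) ∧
      perf P R π μ γ - perf P R πs μ γ =
        ∑ s, occ P πs μ γ s * ∑ a, (π s a - πs s a) * (R s a + γ * ∑ s', P s a s' * V s') := by
  obtain ⟨V, hV, hB⟩ := exists_value P hP0 hP1 R Rmax hR γ hγ0 hγ1 π hπ0 hπ1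
  refine ⟨V, hV, ?_⟩
  obtain ⟨-, -, f1, g1⟩ := occ_facts P hP0 hP1 R μ hμ0 hμ1 γ hγ0 hγ1 π hπ0 hπ1
  obtain ⟨-, -, f2, g2⟩ := occ_facts P hP0 hP1 R μ hμ0 hμ1 γ hγ0 hγ1 πs hπs0 hπs1
  have key : ∀ (π' : S → A → ℝ), 
      (∀ s', occ P π' μ γ s' = μ s' + γ * ∑ s, ∑ a, π' s a * P s a s' * occ P π' μ γ s) →
      ∑ s, occ P π' μ γ s * V s = ∑ s, μ s * V s
        + ∑ s, occ P π' μ γ s * ∑ a, π' s a * (γ * ∑ s', P s a s' * V s') := by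
    intro π' hf
    have : ∑ s, occ P π' μ γ s * V s = ∑ s', (μ s' + γ * ∑ s, ∑ a, π' s a * P s a s' * occ P π' μ γ s) * V s' :=
      sum_congr rfl fun s' _ => by rw [← hf s']
    rw [this]
    simp only [add_mul, sum_add_distrib, mul_sum, sum_mul]
    congr 1
    rw [sum_comm]
    refine sum_congr rfl fun s _ => ?_
    rw [sum_comm]
    refine sum_congr rfl fun a _ => sum_congr rfl fun s' _ => by ring
  have e1 : ∀ π' : S → A → ℝ, ∑ s, ∑ a, R s a * π' s a * occ P π' μ γ s
      = ∑ s, occ P π' μ γ s * ∑ a, π' s a * R s a := fun π' => by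
    simp only [mul_sum]
    exact sum_congr rfl fun s _ => sum_congr rfl fun a _ => by ring
  have k1 := key π f1
  have k2 := key πs f2
  rw [g1, g2, e1, e1]
  have hB' : ∀ π' : S → A → ℝ, ∑ s, occ P π' μ γ s * V s
     = ∑ s, occ P π' μ γ s * ∑ a, π s a * (R s a + γ * ∑ s', P s a s' * V s') := fun π' =>
    sum_congr rfl fun s _ => by rw [← hB s]
  have h1 := hB' π
  have h2 := hB' πs
  simp only [sub_mul, mul_add, sum_add_distrib, sum_sub_distrib, mul_sub] at *
  linarith
end MDP
lemma chg_measure {X : Type*} [Fintype X] (d q f : X → ℝ) (hq0 : ∀ x, 0 ≤ q x)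
    (hq1 : ∑ x, q x = 1) (hd0 : ∀ x, 0 ≤ d x) (hs : ∀ x, 0 < d x → 0 < q x)
    (G : ℝ) (hG : ∑ x, q x * f x ^ 2 ≤ G) :
    ∑ x, d x * f x ≤ (1 + √(dChi2 d q)) * √G := by
  have hχ : 0 ≤ dChi2 d q := sum_nonneg fun x _ => div_nonneg (sq_nonneg _) (hq0 x)
  have h1 : ∑ x, q x * f x ≤ √G := by
    apply Real.le_sqrt_of_sq_le
    refine le_trans ?_ hG
    have := sum_sq_le_sum_mul_sum_of_sq_le_mul univ (r := fun x => q x * f x) (f := q)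
      (g := fun x => q x * f x ^ 2) (fun x _ => hq0 x)
      (fun x _ => mul_nonneg (hq0 x) (sq_nonneg _)) (fun x _ => le_of_eq (by ring))
    rwa [hq1, one_mul] at this
  have h2 : ∑ x, (d x - q x) * f x ≤ √(dChi2 d q) * √G := by
    rw [← Real.sqrt_mul hχ]
    apply Real.le_sqrt_of_sq_le
    refine le_trans ?_ (mul_le_mul_of_nonneg_left hG hχ)
    refine sum_sq_le_sum_mul_sum_of_sq_le_mul univ (r := fun x => (d x - q x) * f x)
      (f := fun x => (d x - q x) ^ 2 / q x)
      (g := fun x => q x * f x ^ 2) (fun x _ => div_nonneg (sq_nonneg _) (hq0 x))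
      (fun x _ => mul_nonneg (hq0 x) (sq_nonneg _)) (fun x _ => le_of_eq ?_)
    rcases (hq0 x).eq_or_lt with h | h
    · have : d x = 0 := by
        by_contra hne
        have := hs x (lt_of_le_of_ne (hd0 x) (Ne.symm hne))
        linarith
      simp [← h, this]
    · field_simp
  have : ∑ x, d x * f x = ∑ x, q x * f x + ∑ x, (d x - q x) * f x := by
    rw [← sum_add_distrib]; exact sum_congr rfl fun x _ => by ring
  rw [this]; linarith

lemma pinsker_log (x : ℝ) (hx : 0 < x) :
    3 * (x - 1) ^ 2 ≤ (2 * x + 4) * (x * Real.log x - x + 1) := by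
  let f : ℝ → ℝ := fun x => Real.log x - (x - 1) * (5 * x + 1) / (x * (2 * x + 4))
  have hd : ∀ y : ℝ, 0 < y → HasDerivAt f ((y - 1) ^ 3 / (y ^ 2 * (y + 2) ^ 2)) y := by
    intro y hy
    have h1 : HasDerivAt (fun x : ℝ => (x - 1) * (5 * x + 1)) (10 * y - 4) y := by
      have := ((hasDerivAt_id y).sub_const 1).mul (((hasDerivAt_id y).const_mul 5).add_const 1)
      refine HasDerivAt.congr_deriv this ?_
      simp only [id]; ring
    have h2 : HasDerivAt (fun x : ℝ => x * (2 * x + 4)) (4 * y + 4) y := by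
      have := (hasDerivAt_id y).mul (((hasDerivAt_id y).const_mul 2).add_const 4)
      refine HasDerivAt.congr_deriv this ?_
      simp only [id]; ring
    have h3 := (Real.hasDerivAt_log hy.ne').sub (h1.div h2 (by positivity))
    refine HasDerivAt.congr_deriv h3 ?_
    field_simp
    ring
  have hf1 : f 1 = 0 := by simp [f]
  have hfx : 0 ≤ f x := by
    rcases le_total 1 x with h | h
    · have hm : MonotoneOn f (Set.Ici 1) := by
        apply monotoneOn_of_deriv_nonneg (convex_Ici 1)
        · exact fun y hy => (hd y (by simp at hy; linarith)).continuousAt.continuousWithinAt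
        · intro y hy
          simp at hy
          exact (hd y (by linarith)).differentiableAt.differentiableWithinAt
        · intro y hy
          simp at hy
          rw [(hd y (by linarith)).deriv]
          have : 0 ≤ y - 1 := by linarith
          positivity
      rw [← hf1]; exact hm (by simp) h h
    · have hm : AntitoneOn f (Set.Ioc 0 1) := by
        apply antitoneOn_of_deriv_nonpos (convex_Ioc 0 1)
        · exact fun y hy => (hd y hy.1).continuousAt.continuousWithinAt
        · intro y hy
          simp at hy
          exact (hd y hy.1).differentiableAt.differentiableWithinAt
        · intro y hy
          simp at hy
          rw [(hd y hy.1).deriv]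
          apply div_nonpos_of_nonpos_of_nonneg _ (by positivity)
          have : 0 ≤ (1 - y) ^ 3 := pow_nonneg (by linarith) 3
          nlinarith
      rw [← hf1]; exact hm ⟨hx, h⟩ (by simp) h
  have e : (2 * x + 4) * (x * Real.log x - x + 1) - 3 * (x - 1) ^ 2 = x * (2 * x + 4) * f x := by
    simp only [f]
    field_simp
    ring
  have : 0 ≤ x * (2 * x + 4) * f x := by positivity
  linarith

lemma pinsker {X : Type*} [Fintype X] (p q : X → ℝ) (hp0 : ∀ x, 0 ≤ p x) (hq0 : ∀ x, 0 ≤ q x)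
    (hp1 : ∑ x, p x = 1) (hq1 : ∑ x, q x = 1) (hs : ∀ x, 0 < p x → 0 < q x) :
    dTV p q ^ 2 ≤ 1 / 2 * dKL p q := by
  have pt : ∀ x, 3 * (p x - q x) ^ 2 ≤
      (2 * p x + 4 * q x) * (p x * Real.log (p x / q x) - p x + q x) := by
    intro x
    rcases (hp0 x).eq_or_lt with h | h
    · rw [← h]; simp; nlinarith [sq_nonneg (q x)]
    · have hq := hs x h
      have := pinsker_log (p x / q x) (div_pos h hq)
      have h2 := mul_le_mul_of_nonneg_left this (sq_nonneg (q x))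
      have e1 : q x ^ 2 * (3 * (p x / q x - 1) ^ 2) = 3 * (p x - q x) ^ 2 := by field_simp
      have e2 : q x ^ 2 * ((2 * (p x / q x) + 4) * (p x / q x * Real.log (p x / q x) - p x / q x + 1))
        = (2 * p x + 4 * q x) * (p x * Real.log (p x / q x) - p x + q x) := by field_simp
      rwa [e1, e2] at h2
  have nn : ∀ x, 0 ≤ p x * Real.log (p x / q x) - p x + q x := by
    intro x
    rcases (hp0 x).eq_or_lt with h | h
    · rw [← h]; simpa using hq0 x
    · have hq := hs x h
      have := pt x
      by_contra hc
      push Not at hc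
      nlinarith [sq_nonneg (p x - q x)]
  have hsq : ∀ x, |p x - q x| ≤ 
      √(((2 * p x + 4 * q x) / 3)) * √((p x * Real.log (p x / q x) - p x + q x)) := fun x => by
    rw [← Real.sqrt_mul (by have := hp0 x; have := hq0 x; positivity)]
    apply Real.abs_le_sqrt
    have := pt x
    linarith
  have h1 : ∑ x, |p x - q x| ≤ √2 * √(dKL p q) := by
    refine (sum_le_sum fun x _ => hsq x).trans ?_
    refine (Real.sum_sqrt_mul_sqrt_le univ
      (fun x => by have := hp0 x; have := hq0 x; positivity) nn).trans (le_of_eq ?_)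
    congr 2
    · rw [← sum_div, sum_add_distrib, ← mul_sum, ← mul_sum, hp1, hq1]; norm_num
    · rw [sum_add_distrib, sum_sub_distrib, hp1, hq1]; simp [dKL]
  have hk : 0 ≤ dKL p q := by
    have : ∑ x, (p x * Real.log (p x / q x) - p x + q x) = dKL p q := by
      rw [sum_add_distrib, sum_sub_distrib, hp1, hq1]; simp [dKL]
    rw [← this]; exact sum_nonneg fun x _ => nn x
  have h3 := pow_le_pow_left₀ (sum_nonneg fun x _ => abs_nonneg (p x - q x)) h1 2
  rw [mul_pow, Real.sq_sqrt (by norm_num), Real.sq_sqrt hk] at h3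
  unfold dTV
  nlinarith

/-- product-weighted sum over samples -/
def smp {X : Type*} [Fintype X] (w : X → ℝ) (N : ℕ) (F : (Fin N → X) → ℝ) : ℝ :=
  ∑ ω : Fin N → X, (∏ j, w (ω j)) * F ω

lemma smp_succ {X : Type*} [Fintype X] (w : X → ℝ) (N : ℕ) (F : (Fin (N + 1) → X) → ℝ) :
    smp w (N + 1) F = ∑ x, w x * smp w N fun ω => F (Fin.cons x ω) := by
  unfold smp
  rw [← (Fin.consEquiv fun _ : Fin (N + 1) => X).sum_comp, Fintype.sum_prod_type]
  refine sum_congr rfl fun x _ => ?_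
  rw [mul_sum]
  refine sum_congr rfl fun ω _ => ?_
  simp [Fin.consEquiv, Fin.prod_univ_succ, mul_assoc]

lemma smp_moments {X : Type*} [Fintype X] (w g : X → ℝ) (hw1 : ∑ x, w x = 1)
    (hg : ∑ x, w x * g x = 0) (N : ℕ) :
    smp w N (fun _ => 1) = 1 ∧ smp w N (fun ω => ∑ j, g (ω j)) = 0 ∧
    smp w N (fun ω => (∑ j, g (ω j)) ^ 2) = N * ∑ x, w x * g x ^ 2 := by
  induction N with
  | zero => simp [smp]
  | succ N ih =>
    obtain ⟨i1, i2, i3⟩ := ih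
    have add : ∀ F G : (Fin N → X) → ℝ, smp w N (fun ω => F ω + G ω) = smp w N F + smp w N G :=
      fun F G => by simp [smp, mul_add, sum_add_distrib]
    have cm : ∀ (c : ℝ) (F : (Fin N → X) → ℝ), smp w N (fun ω => c * F ω) = c * smp w N F :=
      fun c F => by simp only [smp, mul_sum]; exact sum_congr rfl fun _ _ => by ring
    have cst : ∀ c : ℝ, smp w N (fun _ => c) = c := fun c => by
      have := cm c (fun _ => 1); simpa [i1] using this
    refine ⟨?_, ?_, ?_⟩
    · rw [smp_succ]; simp [i1, hw1]
    · rw [smp_succ]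
      simp only [Fin.sum_univ_succ, Fin.cons_zero, Fin.cons_succ]
      simp [add, i2, cst, hg]
    · rw [smp_succ]
      simp only [Fin.sum_univ_succ, Fin.cons_zero, Fin.cons_succ]
      have : ∀ x, smp w N (fun ω => (g x + ∑ j, g (ω j)) ^ 2)
          = g x ^ 2 + N * ∑ x, w x * g x ^ 2 := fun x => by
        have e : (fun ω : Fin N → X => (g x + ∑ j, g (ω j)) ^ 2)
          = fun ω => (g x ^ 2 + (2 * g x) * ∑ j, g (ω j)) + (∑ j, g (ω j)) ^ 2 := by
          funext ω; ring
        rw [e, add, add, cm, cst, i2, i3]; ring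
      simp only [this, mul_add, sum_add_distrib, ← sum_mul, hw1]
      push_cast; ring

lemma smp_abs_le {X : Type*} [Fintype X] (w : X → ℝ) (hw0 : ∀ x, 0 ≤ w x) (hw1 : ∑ x, w x = 1)
    (N : ℕ) (hN : 0 < N) (B : X → Prop) [DecidablePred B] (b : ℝ)
    (hb : b = ∑ x, if B x then w x else 0) :
    smp w N (fun ω => |((univ.filter fun j => B (ω j)).card : ℝ) / N - b|) ≤ √(b / N) := by
  have hN' : (0 : ℝ) < N := by exact_mod_cast hN
  let g : X → ℝ := fun x => (if B x then 1 else 0) - b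
  have hg : ∑ x, w x * g x = 0 := by
    simp only [g, mul_sub, sum_sub_distrib, ← sum_mul, hw1, mul_ite, mul_one, mul_zero, ← hb]
    ring
  have hg2 : ∑ x, w x * g x ^ 2 ≤ b := by
    have : ∀ x, w x * g x ^ 2 = (if B x then w x else 0) - 2 * b * (if B x then w x else 0) + b ^ 2 * w x := by
      intro x; simp only [g]; split_ifs <;> ring
    simp only [this, sum_add_distrib, sum_sub_distrib, ← mul_sum, ← hb, hw1]
    nlinarith [sq_nonneg b]
  obtain ⟨m1, m2, m3⟩ := smp_moments w g hw1 hg N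
  have e : ∀ ω : Fin N → X, ((univ.filter fun j => B (ω j)).card : ℝ) / N - b
      = (∑ j, g (ω j)) / N := fun ω => by
    simp only [g, sum_sub_distrib, sum_const, card_univ, Fintype.card_fin, nsmul_eq_mul,
      sum_boole]
    field_simp
  simp only [e]
  apply Real.le_sqrt_of_sq_le
  have hw : ∀ ω : Fin N → X, 0 ≤ ∏ j, w (ω j) := fun ω => prod_nonneg fun j _ => hw0 _
  have cs := sum_sq_le_sum_mul_sum_of_sq_le_mul univ
    (r := fun ω : Fin N → X => (∏ j, w (ω j)) * |(∑ j, g (ω j)) / N|)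
    (f := fun ω => ∏ j, w (ω j)) (g := fun ω => (∏ j, w (ω j)) * ((∑ j, g (ω j)) / N) ^ 2)
    (fun ω _ => hw ω) (fun ω _ => mul_nonneg (hw ω) (sq_nonneg _))
    (fun ω _ => le_of_eq (by rw [mul_pow, sq_abs]; ring))
  have m1' : ∑ ω : Fin N → X, ∏ j, w (ω j) = 1 := by simpa [smp] using m1
  rw [m1', one_mul] at cs
  refine cs.trans ?_
  have : ∑ ω : Fin N → X, (∏ j, w (ω j)) * ((∑ j, g (ω j)) / N) ^ 2
     = (∑ x, w x * g x ^ 2) / N := by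
    have e3 : ∑ ω : Fin N → X, (∏ j, w (ω j)) * ((∑ j, g (ω j)) / N) ^ 2
      = smp w N (fun ω => (∑ j, g (ω j)) ^ 2) / N ^ 2 := by
      rw [smp, sum_div]
      exact sum_congr rfl fun ω _ => by rw [div_pow, mul_div_assoc]
    rw [e3, m3]; field_simp
  rw [this]
  gcongr
lemma avg_sq_le [Fintype A] [Nonempty A] (x y : A → ℝ) (h : ∀ a, x a ^ 2 ≤ y a) :
    (1 / (Fintype.card A : ℝ) * ∑ a, x a) ^ 2 ≤ 1 / (Fintype.card A : ℝ) * ∑ a, y a := by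
  have h1 := sum_div_card_sq_le_sum_sq_div_card (s := (univ : Finset A)) (f := x)
  rw [card_univ] at h1
  have h2 : (∑ a, x a ^ 2) / (Fintype.card A : ℝ) ≤ (∑ a, y a) / (Fintype.card A : ℝ) := by
    gcongr with a; exact h a
  rw [one_div_mul_eq_div, one_div_mul_eq_div]
  linarith

lemma delta_bound [Fintype S] [Fintype A] [Nonempty A] (d : S → ℝ) (hd0 : ∀ s, 0 ≤ d s)
    (D h b : S → A → ℝ) (hD : ∀ s a, |D s a| ≤ 1) (c : ℝ)
    (hb : ∀ s a, |h s a| ≤ c * b s a) :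
    |∑ s, d s * ∑ a, D s a * h s a| ≤
      c * (Fintype.card A : ℝ) * ∑ s, d s * (1 / (Fintype.card A : ℝ) * ∑ a, b s a) := by
  have hA : (0 : ℝ) < Fintype.card A := by exact_mod_cast Fintype.card_pos
  refine (abs_sum_le_sum_abs _ _).trans ?_
  rw [mul_sum]
  refine sum_le_sum fun s _ => ?_
  rw [abs_mul, abs_of_nonneg (hd0 s)]
  have : c * (Fintype.card A : ℝ) * (d s * (1 / (Fintype.card A : ℝ) * ∑ a, b s a))
    = d s * ∑ a, c * b s a := by rw [← mul_sum]; field_simp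
  rw [this]
  refine mul_le_mul_of_nonneg_left ?_ (hd0 s)
  refine (abs_sum_le_sum_abs _ _).trans (sum_le_sum fun a _ => ?_)
  rw [abs_mul]
  calc |D s a| * |h s a| ≤ 1 * |h s a| := by gcongr; exact hD s a
    _ ≤ _ := by rw [one_mul]; exact hb s a

lemma core_bound
    [Fintype S] [Fintype A] [Fintype Z] [Nonempty S] [Nonempty A] [Nonempty Z]
    [DecidableEq Z] [DecidableEq A]
    (P : S → A → S → ℝ) (hP0 : ∀ s a s', 0 ≤ P s a s')
    (hP1 : ∀ s a, ∑ s' : S, P s a s' = 1)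
    (R : S → A → ℝ) (Rmax : ℝ) (hRmax : 0 ≤ Rmax) (hR : ∀ s a, |R s a| ≤ Rmax)
    (μ : S → ℝ) (hμ0 : ∀ s, 0 ≤ μ s) (hμ1 : ∑ s : S, μ s = 1)
    (γ : ℝ) (hγ0 : 0 ≤ γ) (hγ1 : γ < 1)
    (πstar : S → A → ℝ)
    (hπs0 : ∀ s a, 0 ≤ πstar s a) (hπs1 : ∀ s, ∑ a : A, πstar s a = 1)
    (doff : S → ℝ) (hdoff0 : ∀ s, 0 ≤ doff s) (hdoff1 : ∑ s : S, doff s = 1)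
    (hsupp : ∀ s, 0 < visitation P πstar μ γ s → 0 < doff s)
    (φ : S → Z)
    (RZ : Z → A → ℝ) (hRZ : ∀ z a, |RZ z a| ≤ Rmax)
    (PZ : Z → A → S → ℝ) (hPZ0 : ∀ z a s', 0 ≤ PZ z a s')
    (hPZ1 : ∀ z a, ∑ s' : S, PZ z a s' = 1)
    (hPZpos : ∀ s a s', 0 < P s a s' → 0 < doff s → 0 < PZ (φ s) a s')
    (q : Z → A → ℝ) (hq0 : ∀ z a, 0 ≤ q z a) (hq1 : ∀ z, ∑ a : A, q z a = 1) :
    perfDiff P R μ γ (fun s a => q (φ s) a) πstar ≤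
      (1 + Real.sqrt (dChi2 (visitation P πstar μ γ) doff)) *
          ((Fintype.card A : ℝ) / (1 - γ) *
              Real.sqrt (∑ s : S, doff s *
                ((1 / (Fintype.card A : ℝ)) * ∑ a : A, (R s a - RZ (φ s) a) ^ 2))
            + 2 * γ * (Fintype.card A : ℝ) * Rmax / (1 - γ) ^ 2 *
              Real.sqrt ((1 / 2) * ∑ s : S, doff s *
                ((1 / (Fintype.card A : ℝ)) * ∑ a : A, dKL (P s a) (PZ (φ s) a))))
        + Rmax / (1 - γ) ^ 2 * ∑ z, ∑ a, |margDist φ (visitation P πstar μ γ) z * q z a -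
            ∑ s, if φ s = z then visitation P πstar μ γ s * πstar s a else 0| := by
  have hg : 0 < 1 - γ := by linarith
  obtain ⟨o0, -, -, -⟩ := occ_facts P hP0 hP1 R μ hμ0 hμ1 γ hγ0 hγ1 πstar hπs0 hπs1
  obtain ⟨V, hV, hpd⟩ := perf_diff_lemma P hP0 hP1 R Rmax hR μ hμ0 hμ1 γ hγ0 hγ1
    (fun s a => q (φ s) a) (fun s a => hq0 _ a) (fun s => hq1 _) πstar hπs0 hπs1
  have hdo : ∀ s, visitation P πstar μ γ s = (1 - γ) * occ P πstar μ γ s := fun s => rfl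
  have hd0 : ∀ s, 0 ≤ visitation P πstar μ γ s := fun s => by
    rw [hdo]; exact mul_nonneg hg.le (o0 s)
  unfold perfDiff
  rw [hpd]
  have hocc : ∀ s, occ P πstar μ γ s = (1 - γ)⁻¹ * visitation P πstar μ γ s := fun s => by
    rw [hdo]; field_simp
  simp only [hocc]
  generalize visitation P πstar μ γ = d at *
  set χ := √(dChi2 d doff)
  have hle1 : ∀ (p : A → ℝ), (∀ a, 0 ≤ p a) → ∑ a, p a = 1 → ∀ a, p a ≤ 1 := fun p h0 h1 a => by
    rw [← h1]; exact single_le_sum (fun i _ => h0 i) (mem_univ a)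
  have hD : ∀ s a, |q (φ s) a - πstar s a| ≤ 1 := fun s a => by
    have := hle1 _ (hq0 (φ s)) (hq1 (φ s)) a
    have := hle1 _ (hπs0 s) (hπs1 s) a
    have := hq0 (φ s) a
    have := hπs0 s a
    rw [abs_le]; constructor <;> linarith
  have hA : (0 : ℝ) < Fintype.card A := by exact_mod_cast Fintype.card_pos
  -- reward part
  have T1 : |∑ s, d s * ∑ a, (q (φ s) a - πstar s a) * (R s a - RZ (φ s) a)| ≤
      (Fintype.card A : ℝ) * ((1 + χ) * Real.sqrt (∑ s : S, doff s *
                ((1 / (Fintype.card A : ℝ)) * ∑ a : A, (R s a - RZ (φ s) a) ^ 2))) := by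
    refine (delta_bound d hd0 (fun s a => q (φ s) a - πstar s a) _
      (fun s a => |R s a - RZ (φ s) a|) hD 1 (fun s a => by rw [one_mul])).trans ?_
    rw [one_mul]
    refine mul_le_mul_of_nonneg_left ?_ hA.le
    refine chg_measure d doff _ hdoff0 hdoff1 hd0 hsupp _ (sum_le_sum fun s _ => ?_)
    exact mul_le_mul_of_nonneg_left (avg_sq_le _ _ fun a => (sq_abs _).le) (hdoff0 s)
  -- transition part
  have T2 : |∑ s, d s * ∑ a, (q (φ s) a - πstar s a) *
        (γ * ∑ s', (P s a s' - PZ (φ s) a s') * V s')| ≤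
      2 * γ * (Rmax / (1 - γ)) * (Fintype.card A : ℝ) * ((1 + χ) * 
        Real.sqrt ((1 / 2) * ∑ s : S, doff s *
                ((1 / (Fintype.card A : ℝ)) * ∑ a : A, dKL (P s a) (PZ (φ s) a)))) := by
    refine (delta_bound d hd0 (fun s a => q (φ s) a - πstar s a) _
      (fun s a => dTV (P s a) (PZ (φ s) a)) hD (2 * γ * (Rmax / (1 - γ))) (fun s a => ?_)).trans ?_
    · rw [abs_mul, abs_of_nonneg hγ0]
      have : |∑ s', (P s a s' - PZ (φ s) a s') * V s'| ≤
          (∑ s', |P s a s' - PZ (φ s) a s'|) * (Rmax / (1 - γ)) := by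
        refine (abs_sum_le_sum_abs _ _).trans ?_
        rw [sum_mul]
        refine sum_le_sum fun s' _ => ?_
        rw [abs_mul]; exact mul_le_mul_of_nonneg_left (hV s') (abs_nonneg _)
      refine (mul_le_mul_of_nonneg_left this hγ0).trans (le_of_eq ?_)
      unfold dTV; ring
    refine mul_le_mul_of_nonneg_left ?_ (by positivity)
    refine chg_measure d doff _ hdoff0 hdoff1 hd0 hsupp _ ?_
    rw [mul_sum]
    refine sum_le_sum fun s _ => ?_
    rcases (hdoff0 s).eq_or_lt with h | h
    · simp [← h]
    have := avg_sq_le (fun a => dTV (P s a) (PZ (φ s) a))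
      (fun a => 1 / 2 * dKL (P s a) (PZ (φ s) a)) (fun a => 
        pinsker _ _ (hP0 s a) (hPZ0 _ a) (hP1 s a) (hPZ1 _ a) (fun s' hs' => hPZpos s a s' hs' h))
    rw [← mul_sum] at this
    refine (mul_le_mul_of_nonneg_left this (hdoff0 s)).trans (le_of_eq (by ring))
  -- sampling part
  have T3 : |∑ s, d s * ∑ a, (q (φ s) a - πstar s a) *
        (RZ (φ s) a + γ * ∑ s', PZ (φ s) a s' * V s')| ≤
      Rmax / (1 - γ) * ∑ z, ∑ a, |margDist φ d z * q z a -
            ∑ s, if φ s = z then d s * πstar s a else 0| := by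
    let QZ : Z → A → ℝ := fun z a => RZ z a + γ * ∑ s', PZ z a s' * V s'
    have hQ : ∀ z a, |QZ z a| ≤ Rmax / (1 - γ) := fun z a => by
      have h1 := avg_abs_le _ _ (hPZ0 z a) (hPZ1 z a) _ hV
      calc |QZ z a| ≤ |RZ z a| + |γ * ∑ s', PZ z a s' * V s'| := abs_add_le _ _
        _ ≤ Rmax + γ * (Rmax / (1 - γ)) := by
          rw [abs_mul, abs_of_nonneg hγ0]
          gcongr
          exact hRZ z a
        _ = Rmax / (1 - γ) := by field_simp; ring
    have e : ∑ s, d s * ∑ a, (q (φ s) a - πstar s a) * QZ (φ s) a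
       = ∑ z, ∑ a, (margDist φ d z * q z a -
            ∑ s, if φ s = z then d s * πstar s a else 0) * QZ z a := by
      have e1 : ∀ z a, (margDist φ d z * q z a -
            ∑ s, if φ s = z then d s * πstar s a else 0) * QZ z a
          = ∑ s, if z = φ s then d s * ((q (φ s) a - πstar s a) * QZ (φ s) a) else 0 := by
        intro z a
        unfold margDist
        rw [sum_mul, ← sum_sub_distrib, sum_mul]
        refine sum_congr rfl fun s _ => ?_
        by_cases h : φ s = z
        · subst h; simp; ring
        · simp [h, Ne.symm h]
      simp only [e1]
      rw [sum_comm]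
      have e2 : ∀ a, ∑ z, ∑ s, (if z = φ s then d s * ((q (φ s) a - πstar s a) * QZ (φ s) a) else 0)
          = ∑ s, d s * ((q (φ s) a - πstar s a) * QZ (φ s) a) := fun a => by
        rw [sum_comm]; simp
      simp only [e2]
      rw [sum_comm]
      simp only [mul_sum]
    change |∑ s, d s * ∑ a, (q (φ s) a - πstar s a) * QZ (φ s) a| ≤ _
    rw [e, mul_sum]
    refine (abs_sum_le_sum_abs _ _).trans (sum_le_sum fun z _ => ?_)
    rw [mul_sum]
    refine (abs_sum_le_sum_abs _ _).trans (sum_le_sum fun a _ => ?_)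
    rw [abs_mul, mul_comm]
    exact mul_le_mul_of_nonneg_right (hQ z a) (abs_nonneg _)
  have split : ∑ s, (1 - γ)⁻¹ * d s * ∑ a, (q (φ s) a - πstar s a) *
        (R s a + γ * ∑ s', P s a s' * V s') = (1 - γ)⁻¹ * (
      ∑ s, d s * ∑ a, (q (φ s) a - πstar s a) * (R s a - RZ (φ s) a) +
      ∑ s, d s * ∑ a, (q (φ s) a - πstar s a) *
        (γ * ∑ s', (P s a s' - PZ (φ s) a s') * V s') +
      ∑ s, d s * ∑ a, (q (φ s) a - πstar s a) *
        (RZ (φ s) a + γ * ∑ s', PZ (φ s) a s' * V s')) := by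
    rw [← sum_add_distrib, ← sum_add_distrib, mul_sum]
    refine sum_congr rfl fun s _ => ?_
    rw [← mul_add, ← mul_add, ← sum_add_distrib, ← sum_add_distrib, mul_assoc]
    congr 2
    refine sum_congr rfl fun a _ => ?_
    simp only [sub_mul, sum_sub_distrib]
    ring
  rw [split, abs_mul, abs_of_pos (inv_pos.mpr hg)]
  have := (abs_add_le _ _).trans (add_le_add ((abs_add_le _ _).trans (add_le_add T1 T2)) T3)
  refine (mul_le_mul_of_nonneg_left this (inv_pos.mpr hg).le).trans (le_of_eq ?_)
  field_simp

lemma sum_sqrt_le {I : Type*} [Fintype I] (p : I → ℝ) (hp : ∀ i, 0 ≤ p i) (h1 : ∑ i, p i = 1)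
    (N : ℕ) : ∑ i, √(p i / N) ≤ √((Fintype.card I : ℝ) / N) := by
  have h := Real.sum_sqrt_mul_sqrt_le univ hp (g := fun _ => 1 / (N : ℝ)) (fun i => by positivity)
  simp only [h1, sum_const, card_univ, nsmul_eq_mul, Real.sqrt_one, one_mul] at h
  refine le_trans (le_of_eq ?_) (h.trans (le_of_eq (by rw [mul_one_div])))
  refine sum_congr rfl fun i _ => ?_
  rw [← Real.sqrt_mul (hp i), mul_one_div]
theorem sample_efficiency_of_representation_bc
    [Fintype S] [Fintype A] [Fintype Z] [Nonempty S] [Nonempty A] [Nonempty Z]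
    [DecidableEq Z] [DecidableEq A]
    (P : S → A → S → ℝ) (hP0 : ∀ s a s', 0 ≤ P s a s')
    (hP1 : ∀ s a, ∑ s' : S, P s a s' = 1)
    (R : S → A → ℝ) (Rmax : ℝ) (hRmax : 0 ≤ Rmax) (hR : ∀ s a, |R s a| ≤ Rmax)
    (μ : S → ℝ) (hμ0 : ∀ s, 0 ≤ μ s) (hμ1 : ∑ s : S, μ s = 1)
    (γ : ℝ) (hγ0 : 0 ≤ γ) (hγ1 : γ < 1)
    (πstar : S → A → ℝ)
    (hπs0 : ∀ s a, 0 ≤ πstar s a) (hπs1 : ∀ s, ∑ a : A, πstar s a = 1)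
    (doff : S → ℝ) (hdoff0 : ∀ s, 0 ≤ doff s) (hdoff1 : ∑ s : S, doff s = 1)
    (hsupp : ∀ s, 0 < visitation P πstar μ γ s → 0 < doff s)
    (φ : S → Z)
    (RZ : Z → A → ℝ) (hRZ : ∀ z a, |RZ z a| ≤ Rmax)
    (PZ : Z → A → S → ℝ) (hPZ0 : ∀ z a s', 0 ≤ PZ z a s')
    (hPZ1 : ∀ z a, ∑ s' : S, PZ z a s' = 1)
    (hPZpos : ∀ s a s', 0 < P s a s' → 0 < doff s → 0 < PZ (φ s) a s')
    (N : ℕ) (hN : 0 < N)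
    (π₀ : Z → A → ℝ) (hπ₀0 : ∀ z a, 0 ≤ π₀ z a) (hπ₀1 : ∀ z, ∑ a : A, π₀ z a = 1) :
    ∑ ω : Fin N → S × A,
        (∏ j : Fin N, visitation P πstar μ γ (ω j).1 * πstar (ω j).1 (ω j).2) *
          perfDiff P R μ γ
            (fun s a =>
              if 0 < (univ.filter fun j : Fin N => φ (ω j).1 = φ s).card then
                ((univ.filter fun j : Fin N => φ (ω j).1 = φ s ∧ (ω j).2 = a).card : ℝ) /
                  ((univ.filter fun j : Fin N => φ (ω j).1 = φ s).card : ℝ)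
              else π₀ (φ s) a)
            πstar ≤
      (1 + Real.sqrt (dChi2 (visitation P πstar μ γ) doff)) *
          ((Fintype.card A : ℝ) / (1 - γ) *
              Real.sqrt (∑ s : S, doff s *
                ((1 / (Fintype.card A : ℝ)) * ∑ a : A, (R s a - RZ (φ s) a) ^ 2))
            + 2 * γ * (Fintype.card A : ℝ) * Rmax / (1 - γ) ^ 2 *
              Real.sqrt ((1 / 2) * ∑ s : S, doff s *
                ((1 / (Fintype.card A : ℝ)) * ∑ a : A, dKL (P s a) (PZ (φ s) a))))
        + (2 * Rmax / (1 - γ) ^ 2) *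
            Real.sqrt ((Fintype.card Z * Fintype.card A : ℝ) / N) := by
  set d := visitation P πstar μ γ with hd
  have hg : 0 < 1 - γ := by linarith
  obtain ⟨o0, o1, -, -⟩ := occ_facts P hP0 hP1 R μ hμ0 hμ1 γ hγ0 hγ1 πstar hπs0 hπs1
  have hd0 : ∀ s, 0 ≤ d s := fun s => mul_nonneg hg.le (o0 s)
  have hd1 : ∑ s, d s = 1 := by
    have : ∑ s, d s = (1 - γ) * ∑ s, occ P πstar μ γ s := by rw [mul_sum]; rfl
    rw [this, o1]; field_simp
  let w : S × A → ℝ := fun x => d x.1 * πstar x.1 x.2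
  have hw0 : ∀ x, 0 ≤ w x := fun x => mul_nonneg (hd0 _) (hπs0 _ _)
  have hw1 : ∑ x, w x = 1 := by
    rw [Fintype.sum_prod_type]
    simp only [w, ← mul_sum, hπs1, mul_one, hd1]
  let p : Z → ℝ := margDist φ d
  let m : Z → A → ℝ := fun z a => ∑ s, if φ s = z then d s * πstar s a else 0
  let nz : (Fin N → S × A) → Z → ℝ := fun ω z =>
    ((univ.filter fun j : Fin N => φ (ω j).1 = z).card : ℝ)
  let nza : (Fin N → S × A) → Z → A → ℝ := fun ω z a =>
    ((univ.filter fun j : Fin N => φ (ω j).1 = z ∧ (ω j).2 = a).card : ℝ)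
  let q : (Fin N → S × A) → Z → A → ℝ := fun ω z a =>
    if 0 < (univ.filter fun j : Fin N => φ (ω j).1 = z).card then nza ω z a / nz ω z else π₀ z a
  have hN' : (0 : ℝ) < N := by exact_mod_cast hN
  have hsumn : ∀ ω z, ∑ a, nza ω z a = nz ω z := fun ω z => by
    simp only [nza, nz]
    rw [card_eq_sum_card_fiberwise (f := fun j => (ω j).2) (t := univ) (fun _ _ => by simp)]
    push_cast
    simp only [filter_filter]
  have hq0 : ∀ ω z a, 0 ≤ q ω z a := fun ω z a => by
    simp only [q]; split_ifs
    · simp only [nza, nz]; positivity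
    · exact hπ₀0 z a
  have hq1 : ∀ ω z, ∑ a, q ω z a = 1 := fun ω z => by
    simp only [q]; split_ifs with h
    · rw [← sum_div, hsumn]
      exact div_self (by simp only [nz]; positivity)
    · exact hπ₀1 z
  have hnq : ∀ ω z a, nz ω z * q ω z a = nza ω z a := fun ω z a => by
    simp only [q]; split_ifs with h
    · have : nz ω z ≠ 0 := by simp only [nz]; positivity
      field_simp
    · have h0 : nz ω z = 0 := by simp only [nz]; exact_mod_cast Nat.eq_zero_of_not_pos h
      have h1 := hsumn ω z
      rw [h0] at h1
      have h2 := (sum_eq_zero_iff_of_nonneg (fun a _ => by simp only [nza]; positivity)).mp h1 a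
        (mem_univ a)
      rw [h0, h2, zero_mul]
  have hprod : ∀ ω : Fin N → S × A, 0 ≤ ∏ j, w (ω j) := fun ω => prod_nonneg fun j _ => hw0 _
  have hmass : ∑ ω : Fin N → S × A, ∏ j, w (ω j) = 1 := by
    have := (smp_moments w (fun _ => 0) hw1 (by simp) N).1
    simpa [smp] using this
  have hpt : ∀ ω, ∑ z, ∑ a, |p z * q ω z a - m z a| ≤
      ∑ z, |nz ω z / N - p z| + ∑ z, ∑ a, |nza ω z a / N - m z a| := fun ω => by
    rw [← sum_add_distrib]
    refine sum_le_sum fun z _ => ?_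
    have : |nz ω z / N - p z| = ∑ a, |nz ω z / N - p z| * q ω z a := by
      rw [← mul_sum, hq1, mul_one]
    rw [this, ← sum_add_distrib]
    refine sum_le_sum fun a _ => ?_
    have e : p z * q ω z a - m z a = -((nz ω z / N - p z) * q ω z a) + (nza ω z a / N - m z a) := by
      rw [← hnq]; ring
    rw [e]
    refine (abs_add_le _ _).trans ?_
    rw [abs_neg, abs_mul, abs_of_nonneg (hq0 ω z a)]
  have hp0 : ∀ z, 0 ≤ p z := fun z => sum_nonneg fun s _ => by
    split_ifs
    exacts [hd0 s, le_rfl]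
  have hp1 : ∑ z, p z = 1 := by
    simp only [p, margDist]; rw [sum_comm]; simp [hd1]
  have hm0 : ∀ z a, 0 ≤ m z a := fun z a => sum_nonneg fun s _ => by
    split_ifs
    exacts [mul_nonneg (hd0 s) (hπs0 s a), le_rfl]
  have hm1 : ∀ z, ∑ a, m z a = p z := fun z => by
    simp only [m, p, margDist]; rw [sum_comm]
    refine sum_congr rfl fun s _ => ?_
    split_ifs
    · rw [← mul_sum, hπs1, mul_one]
    · simp
  have b1 : ∀ z, smp w N (fun ω => |nz ω z / N - p z|) ≤ √(p z / N) := fun z => by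
    refine smp_abs_le w hw0 hw1 N hN (fun x => φ x.1 = z) (p z) ?_
    rw [Fintype.sum_prod_type]
    simp only [p, margDist]
    refine sum_congr rfl fun s _ => ?_
    split_ifs
    · simp only [w]; rw [← mul_sum, hπs1, mul_one]
    · simp
  have b2 : ∀ z a, smp w N (fun ω => |nza ω z a / N - m z a|) ≤ √(m z a / N) := fun z a => by
    refine smp_abs_le w hw0 hw1 N hN (fun x => φ x.1 = z ∧ x.2 = a) (m z a) ?_
    rw [Fintype.sum_prod_type]
    simp only [m]
    refine sum_congr rfl fun s _ => ?_
    by_cases h : φ s = z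
    · simp [h, w]
    · simp [h]
  have hcA : (1 : ℝ) ≤ Fintype.card A := by exact_mod_cast Fintype.card_pos
  have samp : smp w N (fun ω => ∑ z, ∑ a, |p z * q ω z a - m z a|) ≤
      2 * √((Fintype.card Z * Fintype.card A : ℝ) / N) := by
    have s1 : smp w N (fun ω => ∑ z, ∑ a, |p z * q ω z a - m z a|) ≤
        ∑ z, smp w N (fun ω => |nz ω z / N - p z|) +
        ∑ z, ∑ a, smp w N (fun ω => |nza ω z a / N - m z a|) := by
      have e : ∑ z, smp w N (fun ω => |nz ω z / N - p z|) +
        ∑ z, ∑ a, smp w N (fun ω => |nza ω z a / N - m z a|) =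
          smp w N (fun ω => ∑ z, |nz ω z / N - p z| + ∑ z, ∑ a, |nza ω z a / N - m z a|) := by
        simp only [smp, mul_add, mul_sum, sum_add_distrib]
        congr 1
        · rw [sum_comm]
        · rw [sum_comm (s := (univ : Finset (Fin N → S × A)))]
          refine sum_congr rfl fun z _ => ?_
          rw [sum_comm]
      rw [e]
      exact sum_le_sum fun ω _ => mul_le_mul_of_nonneg_left (hpt ω) (hprod ω)
    have s2 : ∑ z, smp w N (fun ω => |nz ω z / N - p z|) ≤
        √((Fintype.card Z * Fintype.card A : ℝ) / N) := by
      refine (sum_le_sum fun z _ => b1 z).trans ((sum_sqrt_le p hp0 hp1 N).trans ?_)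
      apply Real.sqrt_le_sqrt
      gcongr
      exact le_mul_of_one_le_right (by positivity) hcA
    have s3 : ∑ z, ∑ a, smp w N (fun ω => |nza ω z a / N - m z a|) ≤
        √((Fintype.card Z * Fintype.card A : ℝ) / N) := by
      refine (sum_le_sum fun z _ => sum_le_sum fun a _ => b2 z a).trans ?_
      have := sum_sqrt_le (fun x : Z × A => m x.1 x.2) (fun x => hm0 _ _)
        (by rw [Fintype.sum_prod_type]; simp only [hm1, hp1]) N
      rw [Fintype.sum_prod_type] at this
      simpa using this
    linarith
  have hcore := fun ω => core_bound P hP0 hP1 R Rmax hRmax hR μ hμ0 hμ1 γ hγ0 hγ1 πstar hπs0 hπs1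
    doff hdoff0 hdoff1 hsupp φ RZ hRZ PZ hPZ0 hPZ1 hPZpos (q ω) (hq0 ω) (hq1 ω)
  rw [← hd] at hcore
  generalize (1 + Real.sqrt (dChi2 d doff)) *
          ((Fintype.card A : ℝ) / (1 - γ) *
              Real.sqrt (∑ s : S, doff s *
                ((1 / (Fintype.card A : ℝ)) * ∑ a : A, (R s a - RZ (φ s) a) ^ 2))
            + 2 * γ * (Fintype.card A : ℝ) * Rmax / (1 - γ) ^ 2 *
              Real.sqrt ((1 / 2) * ∑ s : S, doff s *
                ((1 / (Fintype.card A : ℝ)) * ∑ a : A, dKL (P s a) (PZ (φ s) a)))) = E at *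
  calc _ ≤ ∑ ω : Fin N → S × A, (∏ j, w (ω j)) *
        (E + Rmax / (1 - γ) ^ 2 * ∑ z, ∑ a, |p z * q ω z a - m z a|) :=
        sum_le_sum fun ω _ => mul_le_mul_of_nonneg_left (hcore ω) (hprod ω)
    _ = E + Rmax / (1 - γ) ^ 2 * smp w N (fun ω => ∑ z, ∑ a, |p z * q ω z a - m z a|) := by
        simp only [mul_add, sum_add_distrib]
        rw [← sum_mul, hmass, one_mul, smp, mul_sum (s := univ (α := Fin N → S × A))]
        congr 1
        exact sum_congr rfl fun ω _ => by ring
    _ ≤ E + Rmax / (1 - γ) ^ 2 * (2 * √((Fintype.card Z * Fintype.card A : ℝ) / N)) := by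
        gcongr
    _ = _ := by ring
end
end
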